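/- The invariant ring S[W'^*]^G admits a homogeneous system of parameters consisting of 6 algebraically independent homogeneous invariants f_1, …, f_6 of degrees 2, 3, 3, 4, 6, 7 respectively, over whose generated polynomial subalgebra S[W'^*]^G is a finitely generated module. -/

import Mathlib

set_option synthInstance.maxHeartbeats 1000000
set_option maxHeartbeats 1000000

open MvPolynomial

/-- The field with two elements. -/
abbrev F2 := ZMod 2

/-- `G = GL₃(𝔽₂)`. -/
abbrev G3 := GL (Fin 3) F2

/-- The generator `A` of `G`. -/
def Agen : G3 := ⟨!![1,0,1; 0,1,0; 0,0,1], !![1,0,1; 0,1,0; 0,0,1], by decide, by decide⟩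

/-- The generator `B` of `G`. -/
def Bgen : G3 := ⟨!![0,0,1; 1,0,0; 0,1,0], !![0,1,0; 0,0,1; 1,0,0], by decide, by decide⟩

/-- The matrix `D(A)` of the action on `W'^* = 𝔽₂⁶`. -/
def DA6 : Matrix (Fin 6) (Fin 6) F2 :=
  !![1,0,1,0,0,1; 0,1,0,0,0,0; 0,0,1,0,0,0; 0,0,0,1,1,0; 0,0,0,0,1,0; 0,0,0,0,0,1]

/-- The matrix `D(B)` of the action on `W'^* = 𝔽₂⁶`. -/
def DB6 : Matrix (Fin 6) (Fin 6) F2 :=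
  !![0,0,1,0,0,0; 1,0,0,0,0,0; 0,1,0,0,0,0; 0,0,0,0,0,1; 0,0,0,1,0,0; 0,0,0,0,1,0]

/-- The algebra endomorphism of `S[W'^*] = 𝔽₂[a,b,c,d,e,f]` induced by the right action of
`σ` on the linear forms (coefficient row vectors are multiplied on the right by `D σ`; in
particular the variable `Xᵢ` is sent to the linear form given by the `i`-th row of `D σ`). -/
noncomputable def polyAct (D : G3 →* GL (Fin 6) F2) (σ : G3) :
    MvPolynomial (Fin 6) F2 →ₐ[F2] MvPolynomial (Fin 6) F2 :=
  aeval (fun i => ∑ j, (D σ : Matrix (Fin 6) (Fin 6) F2) i j • X j)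

/-- The invariant ring `S[W'^*]^H` for a subgroup `H ≤ G`. -/
noncomputable def invH (D : G3 →* GL (Fin 6) F2) (H : Subgroup G3) :
    Subalgebra F2 (MvPolynomial (Fin 6) F2) where
  carrier := {p | ∀ σ ∈ H, polyAct D σ p = p}
  mul_mem' := fun ha hb σ hσ => by rw [map_mul, ha σ hσ, hb σ hσ]
  add_mem' := fun ha hb σ hσ => by rw [map_add, ha σ hσ, hb σ hσ]
  one_mem' := fun σ _ => map_one _
  zero_mem' := fun σ _ => map_zero _
  algebraMap_mem' := fun r σ _ => AlgHom.commutes _ r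

/-- The invariant ring `S[W'^*]^G`. -/
noncomputable def invG (D : G3 →* GL (Fin 6) F2) :
    Subalgebra F2 (MvPolynomial (Fin 6) F2) :=
  invH D ⊤

/-!
`G` permutes seven linear forms with sum `0` as the points of the Fano plane, so every `G`-stable
family of point sets yields an invariant: the sum of the corresponding squarefree monomials. Take
the pairs, the triples, the lines, the complements of the lines, the complements of the points and
the whole plane. At a common zero of these six invariants let `Z` be the set of points whose form
vanishes. If `Z` is not the whole plane, one of the families (or that of the single points, as the
forms have sum `0`) has exactly one member disjoint from `Z`; its monomial is then the only nonzero
term of a vanishing sum, a contradiction. So the invariants vanish simultaneously only at the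
origin. Graded Nakayama makes the polynomial ring finite over the subalgebra they generate, whence
their algebraic independence by transcendence degree, and finiteness of the invariant ring by
Noetherianity.
-/

section FinitenessCriterion

theorem mem_submodule_of_mem_graded {S R ι A : Type*} [CommRing S] [SetLike A S]
    [AddSubmonoidClass A S] (𝒜 : ℕ → A) [GradedRing 𝒜] [CommRing R] [Algebra R S] [Finite ι]
    {F : ι → S} {d : ι → ℕ} (hF : ∀ i, F i ∈ 𝒜 (d i)) (hd : ∀ i, 0 < d i)
    (hR : ∀ i, F i ∈ Set.range (algebraMap R S)) (N : Submodule R S)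
    (hN : ∀ a, ∀ p ∈ 𝒜 a, p ∈ N ∨ p ∈ Ideal.span (Set.range F)) (a : ℕ) :
    ∀ p ∈ 𝒜 a, p ∈ N := by
  have := Fintype.ofFinite ι
  induction a using Nat.strong_induction_on with
  | _ a ih =>
  intro p hp
  obtain hpN | hpF := hN a p hp
  · exact hpN
  obtain ⟨c, hc⟩ := Ideal.mem_span_range_iff_exists_fun.1 hpF
  have hsum : p = ∑ i, (DirectSum.decompose 𝒜 (c i * F i) a : S) := by
    rw [← AddSubmonoidClass.coe_finsetSum, ← DFinsupp.finsetSum_apply,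
      ← DirectSum.decompose_sum, hc, DirectSum.decompose_of_mem_same 𝒜 hp]
  rw [hsum]
  refine N.sum_mem fun i _ => ?_
  rw [DirectSum.coe_decompose_mul_of_right_mem 𝒜 a (hF i)]
  split_ifs with hle
  · obtain ⟨r, hr⟩ := hR i
    rw [mul_comm, ← hr, ← Algebra.smul_def]
    exact N.smul_mem r (ih (a - d i) (by have := hd i; lia) _ (SetLike.coe_mem _))
  · exact N.zero_mem

variable {σ k ι : Type*} [CommRing k]

theorem mem_span_monomial_of_isHomogeneous {R : Type*} [CommRing R] [Algebra k R]
    [Algebra R (MvPolynomial σ k)] [IsScalarTower k R (MvPolynomial σ k)] {n a : ℕ} (ha : a < n)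
    {p : MvPolynomial σ k} (hp : p.IsHomogeneous a) :
    p ∈ Submodule.span R ((monomial · (1 : k)) '' {e : σ →₀ ℕ | e.degree < n}) := by
  rw [p.as_sum]
  refine Submodule.sum_mem _ fun e he => ?_
  have hmon : monomial e (coeff e p) = algebraMap k R (coeff e p) • monomial e (1 : k) := by
    rw [algebraMap_smul, smul_monomial, smul_eq_mul, mul_one]
  rw [hmon]
  refine Submodule.smul_mem _ _ (Submodule.subset_span ⟨e, ?_, rfl⟩)
  exact (hp.degree_eq_sum_deg_support he).symm.trans_lt ha

variable [Finite σ] [Finite ι]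

attribute [local instance] MvPolynomial.gradedAlgebra

theorem finite_of_idealOfVars_le_radical (R : Type*) [CommRing R] [Algebra k R]
    [Algebra R (MvPolynomial σ k)] [IsScalarTower k R (MvPolynomial σ k)]
    {F : ι → MvPolynomial σ k} {d : ι → ℕ} (hF : ∀ i, (F i).IsHomogeneous (d i))
    (hd : ∀ i, 0 < d i) (hR : ∀ i, F i ∈ Set.range (algebraMap R (MvPolynomial σ k)))
    (hrad : idealOfVars σ k ≤ (Ideal.span (Set.range F)).radical) :
    Module.Finite R (MvPolynomial σ k) := by
  obtain ⟨n, hn⟩ := Ideal.exists_pow_le_of_le_radical_of_fg hrad (idealOfVars_fg σ k)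
  let T : Set (MvPolynomial σ k) := (monomial · 1) '' {e : σ →₀ ℕ | e.degree < n}
  have hT : T.Finite := (Finsupp.finite_of_degree_lt n).image _
  have hlow_or_high (a : ℕ) (p : MvPolynomial σ k) (hp : p ∈ homogeneousSubmodule σ k a) :
      p ∈ Submodule.span R T ∨ p ∈ Ideal.span (Set.range F) := by
    obtain ha | ha := lt_or_ge a n
    · exact .inl (mem_span_monomial_of_isHomogeneous ha hp)
    · refine .inr (hn ((mem_pow_idealOfVars_iff n p).2 fun e he => ?_))
      exact ha.trans_eq (IsHomogeneous.degree_eq_sum_deg_support hp he)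
  refine Module.finite_def.2 (Submodule.fg_def.2 ⟨T, hT, eq_top_iff.2 fun p _ => ?_⟩)
  rw [← sum_homogeneousComponent p]
  exact Submodule.sum_mem _ fun a _ => mem_submodule_of_mem_graded (homogeneousSubmodule σ k)
    hF hd hR _ hlow_or_high a _ (homogeneousComponent_mem a p)

theorem algebraicIndependent_of_idealOfVars_le_radical [IsDomain k]
    {F : ι → MvPolynomial σ k} {d : ι → ℕ} (hF : ∀ i, (F i).IsHomogeneous (d i))
    (hd : ∀ i, 0 < d i) (hrad : idealOfVars σ k ≤ (Ideal.span (Set.range F)).radical)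
    (hcard : Nat.card ι ≤ Nat.card σ) : AlgebraicIndependent k F := by
  have hfin : Module.Finite (Algebra.adjoin k (Set.range F)) (MvPolynomial σ k) :=
    finite_of_idealOfVars_le_radical _ hF hd
      (fun i => ⟨⟨F i, Algebra.subset_adjoin ⟨i, rfl⟩⟩, rfl⟩) hrad
  refine (Algebra.IsAlgebraic.isTranscendenceBasis_of_lift_le_trdeg_of_finite k F ?_).1
  have := Fintype.ofFinite ι
  have := Fintype.ofFinite σ
  simpa [MvPolynomial.trdeg_of_isDomain] using hcard

theorem finite_adjoin_of_finite_ambient [IsNoetherianRing k] {S : Type*} [CommRing S] [Algebra k S]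
    {A : Subalgebra k S} (f : ι → A) [Module.Finite (Algebra.adjoin k (Set.range f)) S] :
    Module.Finite (Algebra.adjoin k (Set.range f)) A := by
  have : Algebra.FiniteType k (Algebra.adjoin k (Set.range f)) :=
    (Subalgebra.fg_iff_finiteType _).1 (Subalgebra.fg_def.2 ⟨_, Set.finite_range f, rfl⟩)
  have : IsNoetherianRing (Algebra.adjoin k (Set.range f)) :=
    Algebra.FiniteType.isNoetherianRing k _
  exact Module.Finite.of_injective
    ((IsScalarTower.toAlgHom (Algebra.adjoin k (Set.range f)) A S).toLinearMap)
    Subtype.val_injective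

theorem algebraicIndependent_and_finite_of_idealOfVars_le_radical [IsDomain k] [IsNoetherianRing k]
    {A : Subalgebra k (MvPolynomial σ k)} {f : ι → A} {d : ι → ℕ}
    (hf : ∀ i, (f i : MvPolynomial σ k).IsHomogeneous (d i)) (hd : ∀ i, 0 < d i)
    (hrad : idealOfVars σ k ≤
      (Ideal.span (Set.range fun i => (f i : MvPolynomial σ k))).radical)
    (hcard : Nat.card ι ≤ Nat.card σ) :
    AlgebraicIndependent k f ∧ Module.Finite (Algebra.adjoin k (Set.range f)) A := by
  have : Module.Finite (Algebra.adjoin k (Set.range f)) (MvPolynomial σ k) :=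
    finite_of_idealOfVars_le_radical (Algebra.adjoin k (Set.range f)) hf hd
      (fun i => ⟨⟨f i, Algebra.subset_adjoin ⟨i, rfl⟩⟩, rfl⟩) hrad
  exact ⟨.of_comp A.val (algebraicIndependent_of_idealOfVars_le_radical hf hd hrad hcard),
    finite_adjoin_of_finite_ambient f⟩

end FinitenessCriterion

section FamilySum

variable {ι K : Type*}

/-- The sum over a family `𝒮` of finite sets of the squarefree monomials `∏ i ∈ s, y i`. The family
of all `k`-element sets gives the `k`-th elementary symmetric polynomial in the `y i`. -/
def familySum [CommSemiring K] (𝒮 : Finset (Finset ι)) (y : ι → K) : K :=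
  ∑ s ∈ 𝒮, ∏ i ∈ s, y i

theorem map_familySum {K' Φ : Type*} [CommSemiring K] [CommSemiring K'] [FunLike Φ K K']
    [RingHomClass Φ K K'] (φ : Φ) (𝒮 : Finset (Finset ι)) (y : ι → K) :
    φ (familySum 𝒮 y) = familySum 𝒮 (φ ∘ y) := by
  simp only [familySum, map_sum, map_prod, Function.comp_apply]

theorem familySum_comp_perm [CommSemiring K] (𝒮 : Finset (Finset ι)) (π : Equiv.Perm ι)
    (hπ : ∀ s ∈ 𝒮, s.map π.toEmbedding ∈ 𝒮) (y : ι → K) :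
    familySum 𝒮 (y ∘ π) = familySum 𝒮 y := by
  have himage : 𝒮.map (Finset.mapEmbedding π.toEmbedding).toEmbedding = 𝒮 := by
    refine Finset.eq_of_subset_of_card_le (fun t ht => ?_) (Finset.card_map _).ge
    obtain ⟨s, hs, rfl⟩ := Finset.mem_map.1 ht
    exact hπ s hs
  conv_rhs => rw [familySum, ← himage]
  simp [familySum, Finset.mapEmbedding_apply]

theorem isHomogeneous_familySum {σ : Type*} [CommSemiring K] {𝒮 : Finset (Finset ι)} {d : ℕ}
    (h𝒮 : (𝒮 : Set (Finset ι)).Sized d) {y : ι → MvPolynomial σ K}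
    (hy : ∀ i, (y i).IsHomogeneous 1) : (familySum 𝒮 y).IsHomogeneous d := by
  refine IsHomogeneous.sum _ _ _ fun s hs => ?_
  simpa [h𝒮 hs] using IsHomogeneous.prod s y (fun _ => 1) fun i _ => hy i

variable [Fintype ι]

theorem familySum_powersetCard_one [CommSemiring K] (y : ι → K) :
    familySum (Finset.powersetCard 1 Finset.univ) y = ∑ i, y i := by
  simp [familySum, Finset.powersetCard_one]

variable [DecidableEq ι]

theorem filter_disjoint_powersetCard_card_compl (Z : Finset ι) :
    {t ∈ Finset.powersetCard Zᶜ.card (Finset.univ : Finset ι) | Disjoint t Z} = {Zᶜ} := by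
  ext t
  simp only [Finset.mem_filter, Finset.mem_powersetCard_univ, Finset.mem_singleton,
    ← Finset.subset_compl_iff_disjoint_right]
  exact ⟨fun ⟨hcard, hsub⟩ => Finset.eq_of_subset_of_card_le hsub hcard.ge, by rintro rfl; simp⟩

-- Apply the hypothesis to the zero set `Z` of `y`: only one monomial of `familySum 𝒮 y` avoids `Z`,
-- so this monomial vanishes, which produces a zero of `y` outside `Z`.
theorem eq_zero_of_forall_exists_isolating_family [CommRing K] [IsDomain K] {y : ι → K}
    (h : ∀ Z : Finset ι, Z ≠ Finset.univ →
      ∃ 𝒮, familySum 𝒮 y = 0 ∧ {t ∈ 𝒮 | Disjoint t Z}.card = 1) : y = 0 := by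
  classical
  let Z : Finset ι := {i | y i = 0}
  by_contra hy
  have hZ : Z ≠ Finset.univ := fun hZ => hy (funext fun i => by simpa [Z] using hZ.ge (by simp))
  obtain ⟨𝒮, hzero, hone⟩ := h Z hZ
  obtain ⟨s, hs⟩ := Finset.card_eq_one.1 hone
  have hsZ : Disjoint s Z := (Finset.mem_filter.1 (hs.ge (Finset.mem_singleton_self s))).2
  have hprod : ∏ i ∈ s, y i = 0 := by
    rw [← hzero, familySum, ← Finset.sum_singleton (fun s => ∏ i ∈ s, y i), ← hs]
    refine Finset.sum_filter_of_ne fun t _ ht => Finset.disjoint_left.2 fun i hit hiZ => ht ?_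
    exact Finset.prod_eq_zero hit (Finset.mem_filter.1 hiZ).2
  obtain ⟨i, his, hi⟩ := Finset.prod_eq_zero_iff.1 hprod
  exact Finset.disjoint_left.1 hsZ his (by simp [Z, hi])

end FamilySum

section FanoPlane

open scoped FinsetFamily

/-- The lines of the Fano plane on the points `ℤ/7`: the translates of the perfect difference set
`{0, 1, 3}`. -/
def fanoLines : Finset (Finset (Fin 7)) :=
  Finset.univ.image fun i => {i, i + 1, i + 3}

/-- The permutations of the points of the Fano plane that preserve lines. -/
def IsCollineation (π : Equiv.Perm (Fin 7)) : Prop :=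
  ∀ s ∈ fanoLines, s.map π.toEmbedding ∈ fanoLines

theorem sized_fanoLines : (fanoLines : Set (Finset (Fin 7))).Sized 3 := by
  intro s hs
  obtain ⟨i, -, rfl⟩ := Finset.mem_image.1 (Finset.mem_coe.1 hs)
  revert i
  decide

theorem card_filter_disjoint_compls_fanoLines :
    ∀ Z : Finset (Fin 7), Z.card = 2 → {t ∈ fanoLinesᶜˢ | Disjoint t Z}.card = 1 := by
  decide +kernel

theorem card_filter_disjoint_fanoLines_or_compls :
    ∀ Z : Finset (Fin 7), Z.card = 3 → {t ∈ fanoLines | Disjoint t Z}.card = 1 ∨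
      {t ∈ fanoLinesᶜˢ | Disjoint t Z}.card = 1 := by
  decide +kernel

/-- The families of point sets of the Fano plane whose sums of monomials form the system of
parameters: all pairs, all triples, the lines, the complements of the lines, the complements of the
points, and the whole plane. -/
def fanoFamily : Fin 6 → Finset (Finset (Fin 7)) :=
  ![Finset.powersetCard 2 Finset.univ, Finset.powersetCard 3 Finset.univ, fanoLines, fanoLinesᶜˢ,
    Finset.powersetCard 6 Finset.univ, Finset.powersetCard 7 Finset.univ]

theorem sized_fanoFamily (k : Fin 6) :
    (fanoFamily k : Set (Finset (Fin 7))).Sized (![2, 3, 3, 4, 6, 7] k) := by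
  fin_cases k
  · exact Set.sized_powersetCard _ _
  · exact Set.sized_powersetCard _ _
  · exact sized_fanoLines
  · exact sized_fanoLines.compls
  · exact Set.sized_powersetCard _ _
  · exact Set.sized_powersetCard _ _

theorem IsCollineation.map_mem_fanoFamily {π : Equiv.Perm (Fin 7)} (hπ : IsCollineation π)
    (k : Fin 6) : ∀ s ∈ fanoFamily k, s.map π.toEmbedding ∈ fanoFamily k := by
  have hcard (n : ℕ) : ∀ s ∈ Finset.powersetCard n (Finset.univ : Finset (Fin 7)),
      s.map π.toEmbedding ∈ Finset.powersetCard n Finset.univ := by simp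
  have hcompl : ∀ s ∈ fanoLinesᶜˢ, s.map π.toEmbedding ∈ fanoLinesᶜˢ := by
    intro s hs
    have hmap : (s.map π.toEmbedding)ᶜ = sᶜ.map π.toEmbedding := by
      ext i
      simp [Finset.mem_map_equiv]
    exact Finset.mem_compls.2 (hmap ▸ hπ _ (Finset.mem_compls.1 hs))
  fin_cases k
  exacts [hcard 2, hcard 3, hπ, hcompl, hcard 6, hcard 7]

theorem eq_zero_of_familySum_fanoFamily_eq_zero {K : Type*} [CommRing K] [IsDomain K]
    {y : Fin 7 → K} (hsum : ∑ i, y i = 0) (hy : ∀ k, familySum (fanoFamily k) y = 0) : y = 0 := by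
  refine eq_zero_of_forall_exists_isolating_family fun Z hZ => ?_
  have hcompl : Zᶜ.card = 7 - Z.card := Z.card_compl
  have hsymm : {t ∈ Finset.powersetCard (7 - Z.card) (Finset.univ : Finset (Fin 7)) |
      Disjoint t Z}.card = 1 := by
    rw [← hcompl, filter_disjoint_powersetCard_card_compl, Finset.card_singleton]
  have hlt : Z.card < 7 := by
    simpa using Finset.card_lt_card (Finset.ssubset_univ_iff.2 hZ)
  interval_cases hn : Z.card
  · exact ⟨_, hy 5, hsymm⟩
  · exact ⟨_, hy 4, hsymm⟩
  · exact ⟨_, hy 3, card_filter_disjoint_compls_fanoLines Z hn⟩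
  · obtain hline | hcompl := card_filter_disjoint_fanoLines_or_compls Z hn
    · exact ⟨_, hy 2, hline⟩
    · exact ⟨_, hy 3, hcompl⟩
  · exact ⟨_, hy 1, hsymm⟩
  · exact ⟨_, hy 0, hsymm⟩
  · exact ⟨_, (familySum_powersetCard_one y).trans hsum, hsymm⟩

end FanoPlane

section Generation

open Matrix Matrix.SpecialLinearGroup
open scoped commutatorElement

theorem commutatorElement_transvection {n R : Type*} [Fintype n] [DecidableEq n] [CommRing R]
    {i j l : n} (hij : i ≠ j) (hjl : j ≠ l) (hil : i ≠ l) (a b : R) :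
    ⁅SpecialLinearGroup.transvection hij a, SpecialLinearGroup.transvection hjl b⁆ =
      SpecialLinearGroup.transvection hil (a * b) := by
  rw [commutatorElement_def, transvection_inv, transvection_inv]
  apply coeMonoidHom_injective
  simp only [map_mul, coeMonoidHom_apply, transvection_coe, mul_add, add_mul, one_mul, mul_one,
    single_mul_single_same, single_mul_single_of_ne _ _ _ _ hij.symm,
    single_mul_single_of_ne _ _ _ _ hjl.symm, single_mul_single_of_ne _ _ _ _ hil.symm,
    ← single_neg, mul_neg, neg_mul, zero_mul]
  abel

/-- The transvection `1 + c • E_{ij}` as an element of the general linear group. -/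
abbrev transvectionGL {n R : Type*} [Fintype n] [DecidableEq n] [CommRing R] {i j : n} (hij : i ≠ j)
    (c : R) : GL n R :=
  toGL (SpecialLinearGroup.transvection hij c)

theorem eq_top_of_transvectionGL_mem {n : Type*} [Fintype n] [DecidableEq n]
    {H : Subgroup (GL n F2)}
    (hH : ∀ i j (hij : i ≠ j), transvectionGL hij (1 : F2) ∈ H) :
    H = ⊤ := by
  have hF2 : ∀ c : F2, c = 0 ∨ c = 1 := by decide
  have htransvec (L : List (TransvectionStruct n F2)) :
      toGL (L.map TransvectionStruct.toSpecialLinearGroup).prod ∈ H := by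
    rw [map_list_prod, List.map_map]
    refine H.list_prod_mem fun g hg => ?_
    obtain ⟨⟨i, j, hij, c⟩, -, rfl⟩ := List.mem_map.1 hg
    obtain rfl | rfl := hF2 c
    · simp [H.one_mem]
    · exact hH i j hij
  refine eq_top_iff.2 fun g _ => ?_
  have hdet : (g : Matrix n n F2).det = 1 := (hF2 _).resolve_left (isUnits_det_units g).ne_zero
  obtain ⟨L, L', d, hd, hg⟩ := exists_list_transvec_mul_diagonal_mul_list_transvec
    (⟨g, hdet⟩ : SpecialLinearGroup n F2)
  have hdiag : (1 : SpecialLinearGroup n F2) = ⟨diagonal d, hd⟩ := by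
    have hd1 : d = 1 := funext fun i => (hF2 (d i)).resolve_left (diagonal_neZero d hd i)
    exact Subtype.ext (hd1 ▸ diagonal_one.symm)
  have hgL : g = toGL ((L.map TransvectionStruct.toSpecialLinearGroup).prod *
      (L'.map TransvectionStruct.toSpecialLinearGroup).prod) := by
    rw [← hdiag, mul_one] at hg
    exact Units.ext (congrArg Subtype.val hg)
  rw [hgL, map_mul]
  exact mul_mem (htransvec L) (htransvec L')

theorem transvectionGL_zero_two_eq_Agen :
    transvectionGL (by decide : (0 : Fin 3) ≠ 2) (1 : F2) = Agen := by
  decide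

theorem Bgen_mul_transvectionGL_mul_inv : ∀ (i j : Fin 3) (hij : i ≠ j),
    Bgen * transvectionGL hij 1 * Bgen⁻¹ = transvectionGL ((add_left_injective 1).ne hij) 1 := by
  decide

-- Conjugating `Agen` by powers of `Bgen` gives the transvections at `(i, i + 2)`; those at
-- `(i, i + 1)` are commutators of these.
theorem closure_Agen_Bgen : Subgroup.closure {Agen, Bgen} = (⊤ : Subgroup G3) := by
  set H : Subgroup G3 := Subgroup.closure {Agen, Bgen}
  have hBgen : Bgen ∈ H := Subgroup.subset_closure (by simp)
  have hconj (i j : Fin 3) (hij : i ≠ j) (hmem : transvectionGL hij (1 : F2) ∈ H) :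
      transvectionGL ((add_left_injective 1).ne hij) (1 : F2) ∈ H :=
    Bgen_mul_transvectionGL_mul_inv i j hij ▸ mul_mem (mul_mem hBgen hmem) (inv_mem hBgen)
  have h02 : transvectionGL (by decide : (0 : Fin 3) ≠ 2) (1 : F2) ∈ H :=
    transvectionGL_zero_two_eq_Agen ▸ Subgroup.subset_closure (by simp)
  have hadd_two (i j : Fin 3) (hij : i ≠ j) (hj : j = i + 2) :
      transvectionGL hij (1 : F2) ∈ H := by
    subst hj
    fin_cases i
    exacts [h02, hconj 0 2 _ h02, hconj 1 0 _ (hconj 0 2 _ h02)]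
  have hadd_one (i j : Fin 3) (hij : i ≠ j) (hj : j = i + 1) :
      transvectionGL hij (1 : F2) ∈ H := by
    obtain ⟨l, hl, hjl⟩ : ∃ l, l = i + 2 ∧ j = l + 2 := ⟨i + 2, rfl, by grind⟩
    have hil : i ≠ l := by grind
    have hlj : l ≠ j := by grind
    have hcomm : ⁅transvectionGL hil (1 : F2), transvectionGL hlj (1 : F2)⁆ =
        transvectionGL hij (1 : F2) := by
      rw [← map_commutatorElement, commutatorElement_transvection hil hlj hij, mul_one]
    exact hcomm ▸ H.commutator_le_self
      (Subgroup.commutator_mem_commutator (hadd_two i l hil hl) (hadd_two l j hlj hjl))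
  refine eq_top_of_transvectionGL_mem fun i j hij => ?_
  obtain hj | hj : j = i + 1 ∨ j = i + 2 := by grind
  exacts [hadd_one i j hij hj, hadd_two i j hij hj]

end Generation

section InvariantRing

variable {D : G3 →* GL (Fin 6) F2}

theorem polyAct_one : polyAct D 1 = AlgHom.id F2 (MvPolynomial (Fin 6) F2) := by
  refine MvPolynomial.algHom_ext fun i => ?_
  simp [polyAct, Matrix.one_apply]

theorem polyAct_mul (σ τ : G3) : polyAct D (σ * τ) = (polyAct D τ).comp (polyAct D σ) := by
  refine MvPolynomial.algHom_ext fun i => ?_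
  simp only [polyAct, aeval_X, AlgHom.comp_apply, map_mul, Units.val_mul, Matrix.mul_apply,
    map_sum, map_smul, Finset.smul_sum, Finset.sum_smul, smul_smul]
  exact Finset.sum_comm

theorem mem_invH_closure {S : Set G3} {p : MvPolynomial (Fin 6) F2}
    (hp : ∀ σ ∈ S, polyAct D σ p = p) : p ∈ invH D (Subgroup.closure S) := by
  intro σ hσ
  induction hσ using Subgroup.closure_induction with
  | mem σ hσ => exact hp σ hσ
  | one => rw [polyAct_one, AlgHom.id_apply]
  | mul σ τ _ _ hσ hτ => rw [polyAct_mul, AlgHom.comp_apply, hσ, hτ]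
  | inv σ _ hσ =>
    calc polyAct D σ⁻¹ p = polyAct D σ⁻¹ (polyAct D σ p) := by rw [hσ]
      _ = polyAct D (σ * σ⁻¹) p := by rw [polyAct_mul, AlgHom.comp_apply]
      _ = p := by rw [mul_inv_cancel, polyAct_one, AlgHom.id_apply]

theorem mem_invG_of_polyAct_eq {p : MvPolynomial (Fin 6) F2} (hA : polyAct D Agen p = p)
    (hB : polyAct D Bgen p = p) : p ∈ invG D := by
  rw [invG, ← closure_Agen_Bgen]
  exact mem_invH_closure (by simp [hA, hB])

end InvariantRing

section FanoInvariants

/-- The seven linear forms, forming a single `G`-orbit in `W'^*`, labelled by the points of the Fano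
plane so that `G` acts on them by collineations. -/
noncomputable def fanoForm : Fin 7 → MvPolynomial (Fin 6) F2 :=
  ![X 0 + X 1 + X 2 + X 3 + X 4 + X 5, X 1 + X 2 + X 4, X 0 + X 1 + X 3, X 0, X 0 + X 2 + X 5, X 1,
    X 2]

/-- The permutation of the points of the Fano plane by which `Agen` acts on `fanoForm`. -/
def fanoPermA : Equiv.Perm (Fin 7) := Equiv.swap 0 2 * Equiv.swap 3 4

/-- The permutation of the points of the Fano plane by which `Bgen` acts on `fanoForm`:
multiplication by `2`. -/
def fanoPermB : Equiv.Perm (Fin 7) := ⟨(2 * ·), (4 * ·), by decide, by decide⟩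

theorem isCollineation_fanoPermA : IsCollineation fanoPermA := by
  unfold IsCollineation
  decide +kernel

theorem isCollineation_fanoPermB : IsCollineation fanoPermB := by
  unfold IsCollineation
  decide +kernel

theorem isHomogeneous_fanoForm (i : Fin 7) : (fanoForm i).IsHomogeneous 1 := by
  have hX (j : Fin 6) := isHomogeneous_X F2 j
  fin_cases i
  exacts [(((((hX 0).add (hX 1)).add (hX 2)).add (hX 3)).add (hX 4)).add (hX 5),
    ((hX 1).add (hX 2)).add (hX 4), ((hX 0).add (hX 1)).add (hX 3), hX 0,
    ((hX 0).add (hX 2)).add (hX 5), hX 1, hX 2]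

theorem sum_fanoForm : ∑ i, fanoForm i = 0 := by
  have := CharTwo.two_eq_zero (R := MvPolynomial (Fin 6) F2)
  rw [Fin.sum_univ_seven]
  simp only [fanoForm, Matrix.cons_val]
  grind

theorem idealOfVars_le_span_fanoForm :
    idealOfVars (Fin 6) F2 ≤ Ideal.span (Set.range fanoForm) := by
  have hmem (i : Fin 7) : fanoForm i ∈ Ideal.span (Set.range fanoForm) :=
    Ideal.subset_span ⟨i, rfl⟩
  have h3 : X 3 = fanoForm 2 - fanoForm 3 - fanoForm 5 := by
    simp only [fanoForm, Matrix.cons_val]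
    ring
  have h4 : X 4 = fanoForm 1 - fanoForm 5 - fanoForm 6 := by
    simp only [fanoForm, Matrix.cons_val]
    ring
  have h5 : X 5 = fanoForm 4 - fanoForm 3 - fanoForm 6 := by
    simp only [fanoForm, Matrix.cons_val]
    ring
  refine Ideal.span_le.2 (Set.range_subset_iff.2 fun j => ?_)
  fin_cases j
  · exact hmem 3
  · exact hmem 5
  · exact hmem 6
  · exact h3 ▸ sub_mem (sub_mem (hmem 2) (hmem 3)) (hmem 5)
  · exact h4 ▸ sub_mem (sub_mem (hmem 1) (hmem 5)) (hmem 6)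
  · exact h5 ▸ sub_mem (sub_mem (hmem 4) (hmem 3)) (hmem 6)

/-- The six invariants forming the system of parameters. -/
noncomputable def fanoInvariant (k : Fin 6) : MvPolynomial (Fin 6) F2 :=
  familySum (fanoFamily k) fanoForm

theorem isHomogeneous_fanoInvariant (k : Fin 6) :
    (fanoInvariant k).IsHomogeneous (![2, 3, 3, 4, 6, 7] k) :=
  isHomogeneous_familySum (sized_fanoFamily k) isHomogeneous_fanoForm

theorem idealOfVars_le_radical_span_fanoInvariant :
    idealOfVars (Fin 6) F2 ≤ (Ideal.span (Set.range fanoInvariant)).radical := by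
  rw [Ideal.radical_eq_sInf]
  refine le_sInf fun P ⟨hP, _⟩ => idealOfVars_le_span_fanoForm.trans ?_
  have hzero : Ideal.Quotient.mk P ∘ fanoForm = 0 := by
    refine eq_zero_of_familySum_fanoFamily_eq_zero ?_ fun k => ?_
    · simp only [Function.comp_apply, ← map_sum, sum_fanoForm, map_zero]
    · rw [← map_familySum]
      exact Ideal.Quotient.eq_zero_iff_mem.2 (hP (Ideal.subset_span ⟨k, rfl⟩))
  refine Ideal.span_le.2 (Set.range_subset_iff.2 fun i => ?_)
  exact Ideal.Quotient.eq_zero_iff_mem.1 (congrFun hzero i)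

section Action

variable {D : G3 →* GL (Fin 6) F2}

theorem polyAct_Agen_fanoForm (hA : (D Agen : Matrix (Fin 6) (Fin 6) F2) = DA6) :
    polyAct D Agen ∘ fanoForm = fanoForm ∘ fanoPermA := by
  have := CharTwo.two_eq_zero (R := MvPolynomial (Fin 6) F2)
  funext i
  fin_cases i <;>
    simp [fanoForm, fanoPermA, Equiv.swap_apply_def, polyAct, hA, DA6, Fin.sum_univ_succ,
      Fin.succ] <;>
    grind

theorem polyAct_Bgen_fanoForm (hB : (D Bgen : Matrix (Fin 6) (Fin 6) F2) = DB6) :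
    polyAct D Bgen ∘ fanoForm = fanoForm ∘ fanoPermB := by
  have := CharTwo.two_eq_zero (R := MvPolynomial (Fin 6) F2)
  funext i
  fin_cases i <;>
    simp [fanoForm, fanoPermB, polyAct, hB, DB6, Fin.sum_univ_succ, Fin.succ] <;>
    grind

theorem polyAct_fanoInvariant {σ : G3} {π : Equiv.Perm (Fin 7)} (hπ : IsCollineation π)
    (hσ : polyAct D σ ∘ fanoForm = fanoForm ∘ π) (k : Fin 6) :
    polyAct D σ (fanoInvariant k) = fanoInvariant k := by
  rw [fanoInvariant, map_familySum, hσ, familySum_comp_perm _ π (hπ.map_mem_fanoFamily k)]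

theorem fanoInvariant_mem_invG (hA : (D Agen : Matrix (Fin 6) (Fin 6) F2) = DA6)
    (hB : (D Bgen : Matrix (Fin 6) (Fin 6) F2) = DB6) (k : Fin 6) : fanoInvariant k ∈ invG D :=
  mem_invG_of_polyAct_eq
    (polyAct_fanoInvariant isCollineation_fanoPermA (polyAct_Agen_fanoForm hA) k)
    (polyAct_fanoInvariant isCollineation_fanoPermB (polyAct_Bgen_fanoForm hB) k)

end Action

end FanoInvariants

/-- The invariant ring `S[W'^*]^G` admits a homogeneous system of
parameters consisting of `6` algebraically independent homogeneous invariants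
`f₁, …, f₆` of degrees `2, 3, 3, 4, 6, 7` respectively, over whose generated polynomial
subalgebra `S[W'^*]^G` is a finitely generated module. -/
theorem stmt14 (D : G3 →* GL (Fin 6) F2)
    (hA : (D Agen : Matrix (Fin 6) (Fin 6) F2) = DA6)
    (hB : (D Bgen : Matrix (Fin 6) (Fin 6) F2) = DB6) :
    ∃ f : Fin 6 → (invG D),
      AlgebraicIndependent F2 f ∧
      (∀ i, (f i : MvPolynomial (Fin 6) F2).IsHomogeneous (![2, 3, 3, 4, 6, 7] i)) ∧
      Module.Finite (Algebra.adjoin F2 (Set.range f)) (invG D) := by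
  let f (k : Fin 6) : invG D := ⟨fanoInvariant k, fanoInvariant_mem_invG hA hB k⟩
  obtain ⟨hindep, hfinite⟩ := algebraicIndependent_and_finite_of_idealOfVars_le_radical (f := f)
    isHomogeneous_fanoInvariant (by decide) idealOfVars_le_radical_span_fanoInvariant le_rfl
  exact ⟨f, hindep, isHomogeneous_fanoInvariant, hfinite⟩
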